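/- arXiv:1306.5358 — 2 statements merged into one kernel-verified Lean document; each statement's English description precedes it below -/
import Mathlib

section
/- Let 0 ≤ p ≤ 1 and K a fixed n×n complex matrix. The map Z ↦ tr(Z^p K* Z^{1−p} K) is concave on positive definite n×n matrices (Lieb's concavity theorem, trace form). -/
open Matrix ComplexOrder

/-- Functional calculus for Hermitian matrices: apply `f` to the eigenvalues. -/
noncomputable def mfun {m : Type*} [Fintype m] [DecidableEq m] (f : ℝ → ℝ)
    (A : Matrix m m ℂ) : Matrix m m ℂ :=
  if hA : A.IsHermitian then
    (hA.eigenvectorUnitary : Matrix m m ℂ) *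
      Matrix.diagonal (fun i => (f (hA.eigenvalues i) : ℂ)) *
      (star (hA.eigenvectorUnitary : Matrix m m ℂ))
  else 0

/-- Real matrix power via the functional calculus. -/
noncomputable def mpow {m : Type*} [Fintype m] [DecidableEq m]
    (A : Matrix m m ℂ) (p : ℝ) : Matrix m m ℂ :=
  mfun (fun x => x ^ p) A

/-!
Diagonalising `A` and `B` gives `tr (Aᵖ Kᴴ B¹⁻ᵖ K) = ∑ᵢⱼ aᵢᵖ bⱼ¹⁻ᵖ |kⱼᵢ|²`, where `k` is the
matrix of `K` in eigenbases. For `0 < p < 1` the scalar `xᵖ y¹⁻ᵖ` is an integral over `s > 0`,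
with nonnegative weights, of the parallel sums of `x` and `s y`, so it suffices to treat these.
Since the parallel sum of `x` and `z` times `|k|²` is the least value of `z |a|² + x |k - a|²`,
the form belonging to a parallel sum is the minimum over `X` of
`s tr (Xᴴ B X) + tr (A (K - X)ᴴ (K - X))`. This is a minimum of functions that are linear in
`(A, B)`, hence jointly concave.
-/

open MeasureTheory Set

section Convexity

variable {𝕜 E β ι : Type*} [Semiring 𝕜] [PartialOrder 𝕜] [AddCommMonoid E] [SMul 𝕜 E]
  [AddCommMonoid β] [PartialOrder β] [IsOrderedAddMonoid β] [Module 𝕜 β] [PosSMulMono 𝕜 β]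

lemma concaveOn_of_forall_isGLB {S : Set E} {f : E → β} {g : ι → E → β} (hS : Convex 𝕜 S)
    (hg : ∀ i, ConcaveOn 𝕜 S (g i)) (hf : ∀ x ∈ S, IsGLB (range fun i => g i x) (f x)) :
    ConcaveOn 𝕜 S f := by
  refine ⟨hS, fun x hx y hy a b ha hb hab => (hf _ (hS hx hy ha hb hab)).2 ?_⟩
  rintro _ ⟨i, rfl⟩
  calc a • f x + b • f y ≤ a • g i x + b • g i y := by
        gcongr
        · exact (hf x hx).1 ⟨i, rfl⟩
        · exact (hf y hy).1 ⟨i, rfl⟩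
    _ ≤ g i (a • x + b • y) := (hg i).2 hx hy ha hb hab

end Convexity

section ParallelSum

/-- The parallel sum of two nonnegative reals, `(x⁻¹ + y⁻¹)⁻¹` when both are positive. At
`x = y = 0`, division by zero gives the value `0` of its continuous extension. -/
noncomputable def parallelSum (x y : ℝ) : ℝ := x * y / (x + y)

lemma parallelSum_mul_norm_add_sq_le {E : Type*} [SeminormedAddGroup E] {x y : ℝ} (hx : 0 ≤ x)
    (hy : 0 ≤ y) (a b : E) :
    parallelSum x y * ‖a + b‖ ^ 2 ≤ y * ‖a‖ ^ 2 + x * ‖b‖ ^ 2 := by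
  rcases (add_nonneg hx hy).eq_or_lt with hxy | hxy
  · rw [parallelSum, ← hxy, div_zero, zero_mul]
    positivity
  calc parallelSum x y * ‖a + b‖ ^ 2 ≤ x * y / (x + y) * (‖a‖ + ‖b‖) ^ 2 := by
        rw [parallelSum]
        gcongr
        exact norm_add_le a b
    _ ≤ y * ‖a‖ ^ 2 + x * ‖b‖ ^ 2 := by
        rw [div_mul_eq_mul_div, div_le_iff₀ hxy]
        nlinarith only [sq_nonneg (y * ‖a‖ - x * ‖b‖)]

lemma isLeast_parallelSum_mul_norm_sq {E : Type*} [SeminormedAddCommGroup E] [NormedSpace ℝ E]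
    {x y : ℝ} (hx : 0 ≤ x) (hy : 0 ≤ y) (k : E) :
    IsLeast (range fun a : E => y * ‖a‖ ^ 2 + x * ‖k - a‖ ^ 2) (parallelSum x y * ‖k‖ ^ 2) := by
  refine ⟨⟨(x / (x + y)) • k, ?_⟩, ?_⟩
  · rcases (add_nonneg hx hy).eq_or_lt with hxy | hxy
    · obtain ⟨rfl, rfl⟩ := (add_eq_zero_iff_of_nonneg hx hy).1 hxy.symm
      simp [parallelSum]
    · have hk : k - (x / (x + y)) • k = (y / (x + y)) • k := by
        rw [sub_eq_iff_eq_add, ← add_smul, ← add_div, add_comm y, div_self hxy.ne', one_smul]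
      simp only [hk, norm_smul, mul_pow, Real.norm_eq_abs, sq_abs, parallelSum]
      field_simp
  · rintro _ ⟨a, rfl⟩
    simpa using parallelSum_mul_norm_add_sq_le hx hy a (k - a)

lemma mul_rpowIntegrand₀₁_div {p s x y : ℝ} (hs : 0 < s) (hx : 0 ≤ x) (hy : 0 ≤ y) :
    y * Real.rpowIntegrand₀₁ p s (x / y) = s ^ p / s ^ 2 * parallelSum x (s * y) := by
  rcases hy.eq_or_lt with rfl | hy
  · simp [parallelSum]
  have hdiv : s + x / y = (x + s * y) / y := by field_simp; ring
  rw [Real.rpowIntegrand₀₁, hdiv, parallelSum]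
  field_simp
  ring

lemma rpow_mul_rpow_one_sub {p x y : ℝ} (hp : p < 1) (hx : 0 ≤ x) (hy : 0 ≤ y) :
    x ^ p * y ^ (1 - p) = y * (x / y) ^ p := by
  rcases hy.eq_or_lt with rfl | hy
  · simp [Real.zero_rpow (sub_pos.2 hp).ne']
  · rw [Real.div_rpow hx hy.le, Real.rpow_sub hy, Real.rpow_one]
    ring

lemma exists_measure_rpow_mul_rpow_eq_integral_parallelSum {p : ℝ} (hp : p ∈ Ioo 0 1) :
    ∃ μ : Measure ℝ, (∀ᵐ s ∂μ, 0 < s) ∧ ∀ x y, 0 ≤ x → 0 ≤ y →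
      Integrable (fun s => s ^ p / s ^ 2 * parallelSum x (s * y)) μ ∧
      x ^ p * y ^ (1 - p) = ∫ s, s ^ p / s ^ 2 * parallelSum x (s * y) ∂μ := by
  obtain ⟨μ, hμ⟩ := Real.exists_measure_rpow_eq_integral_rpowIntegrand₀₁ hp
  have hpos : ∀ᵐ s ∂μ.restrict (Ioi 0), 0 < s := ae_restrict_mem measurableSet_Ioi
  refine ⟨μ.restrict (Ioi 0), hpos, fun x y hx hy => ?_⟩
  obtain ⟨hint, hrpow⟩ := hμ (x / y) (div_nonneg hx hy)
  have hae : (fun s => y * Real.rpowIntegrand₀₁ p s (x / y)) =ᵐ[μ.restrict (Ioi 0)]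
      fun s => s ^ p / s ^ 2 * parallelSum x (s * y) := by
    filter_upwards [hpos] with s hs using mul_rpowIntegrand₀₁_div hs hx hy
  refine ⟨(hint.const_mul y).congr hae, ?_⟩
  rw [← integral_congr_ae hae, integral_const_mul, ← hrpow, rpow_mul_rpow_one_sub hp.2 hx hy]

end ParallelSum

section SpectralForm

variable {m l : Type*} [Fintype m] [Fintype l] [DecidableEq m] [DecidableEq l]
  {A : Matrix m m ℂ} {B : Matrix l l ℂ} {φ ψ : ℝ → ℝ → ℝ}

lemma mfun_id (hA : A.IsHermitian) : mfun (fun x => x) A = A := by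
  conv_rhs => rw [hA.spectral_theorem, Unitary.conjStarAlgAut_apply]
  rw [mfun, dif_pos hA]
  rfl

lemma mfun_one (hA : A.IsHermitian) : mfun (fun _ => 1) A = 1 := by
  simp [mfun, hA]

/-- The passage from `K` to its matrix in the eigenbases of `A` (on the right) and `B` (on the
left). -/
noncomputable def eigenCoords (hA : A.IsHermitian) (hB : B.IsHermitian) :
    Matrix l m ℂ ≃ₗ[ℂ] Matrix l m ℂ where
  toFun K := star hB.eigenvectorUnitary.1 * K * hA.eigenvectorUnitary.1
  invFun M := hB.eigenvectorUnitary.1 * M * star hA.eigenvectorUnitary.1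
  map_add' K L := by rw [Matrix.mul_add, Matrix.add_mul]
  map_smul' c K := by rw [Matrix.mul_smul, Matrix.smul_mul, RingHom.id_apply]
  left_inv K := by
    beta_reduce
    rw [Matrix.mul_assoc _ K, ← Matrix.mul_assoc, ← Matrix.mul_assoc, Matrix.mul_assoc,
      Unitary.mul_star_self_of_mem hB.eigenvectorUnitary.2,
      Unitary.mul_star_self_of_mem hA.eigenvectorUnitary.2, Matrix.one_mul, Matrix.mul_one]
  right_inv M := by
    beta_reduce
    rw [Matrix.mul_assoc _ M, ← Matrix.mul_assoc, ← Matrix.mul_assoc, Matrix.mul_assoc,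
      Unitary.star_mul_self_of_mem hB.eigenvectorUnitary.2,
      Unitary.star_mul_self_of_mem hA.eigenvectorUnitary.2, Matrix.one_mul, Matrix.mul_one]

/-- The quadratic form at `K` of `φ` applied to the commuting operators `K ↦ K * A` and
`K ↦ B * K` for Hermitian `A` and `B`, that is `∑ᵢⱼ φ(aᵢ, bⱼ) |kⱼᵢ|²` in eigenbases. Like `mfun`, it
is `0` by convention at matrices that are not Hermitian. -/
noncomputable def spectralForm (φ : ℝ → ℝ → ℝ) (K : Matrix l m ℂ) (A : Matrix m m ℂ)
    (B : Matrix l l ℂ) : ℝ :=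
  if h : A.IsHermitian ∧ B.IsHermitian then
    ∑ i, ∑ j, φ (h.1.eigenvalues i) (h.2.eigenvalues j) * ‖eigenCoords h.1 h.2 K j i‖ ^ 2
  else 0

lemma spectralForm_eq_sum (hA : A.IsHermitian) (hB : B.IsHermitian) (φ : ℝ → ℝ → ℝ)
    (K : Matrix l m ℂ) :
    spectralForm φ K A B =
      ∑ i, ∑ j, φ (hA.eigenvalues i) (hB.eigenvalues j) * ‖eigenCoords hA hB K j i‖ ^ 2 :=
  dif_pos ⟨hA, hB⟩

lemma spectralForm_congr (hA : A.PosSemidef) (hB : B.PosSemidef) (K : Matrix l m ℂ)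
    (h : ∀ x y, 0 ≤ x → 0 ≤ y → φ x y = ψ x y) : spectralForm φ K A B = spectralForm ψ K A B := by
  simp only [spectralForm_eq_sum hA.1 hB.1,
    h _ _ (hA.eigenvalues_nonneg _) (hB.eigenvalues_nonneg _)]

lemma spectralForm_const_mul (hA : A.IsHermitian) (hB : B.IsHermitian) (c : ℝ) (φ : ℝ → ℝ → ℝ)
    (K : Matrix l m ℂ) :
    spectralForm (fun x y => c * φ x y) K A B = c * spectralForm φ K A B := by
  simp only [spectralForm_eq_sum hA hB, Finset.mul_sum, mul_assoc]

lemma re_trace_diagonal_mul_conjTranspose_mul_diagonal_mul (a : m → ℝ) (b : l → ℝ)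
    (M : Matrix l m ℂ) :
    (diagonal (fun i => (a i : ℂ)) * Mᴴ * diagonal (fun j => (b j : ℂ)) * M).trace.re =
      ∑ i, ∑ j, a i * b j * ‖M j i‖ ^ 2 := by
  simp only [Matrix.trace, Matrix.diag_apply, Matrix.mul_apply (N := M), Complex.re_sum]
  refine Finset.sum_congr rfl fun i _ => Finset.sum_congr rfl fun j _ => ?_
  rw [Matrix.mul_diagonal, Matrix.diagonal_mul, Matrix.conjTranspose_apply, mul_right_comm,
    mul_assoc (a i : ℂ), Complex.star_def, Complex.conj_mul', mul_right_comm]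
  norm_cast

lemma spectralForm_mul (hA : A.IsHermitian) (hB : B.IsHermitian) (f g : ℝ → ℝ)
    (K : Matrix l m ℂ) :
    spectralForm (fun x y => f x * g y) K A B = (mfun f A * Kᴴ * mfun g B * K).trace.re := by
  rw [spectralForm_eq_sum hA hB, ← re_trace_diagonal_mul_conjTranspose_mul_diagonal_mul
    (fun i => f (hA.eigenvalues i)) (fun j => g (hB.eigenvalues j))]
  simp only [mfun, dif_pos hA, dif_pos hB, eigenCoords, LinearEquiv.coe_mk, LinearMap.coe_mk,
    AddHom.coe_mk, Matrix.conjTranspose_mul, Matrix.star_eq_conjTranspose,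
    Matrix.conjTranspose_conjTranspose, Matrix.mul_assoc]
  rw [Matrix.trace_mul_comm (hA.eigenvectorUnitary : Matrix m m ℂ)]
  simp only [Matrix.mul_assoc]

lemma spectralForm_fst (hA : A.IsHermitian) (hB : B.IsHermitian) (K : Matrix l m ℂ) :
    spectralForm (fun x _ => x) K A B = (A * Kᴴ * K).trace.re := by
  simpa [mfun_id hA, mfun_one hB] using spectralForm_mul hA hB (fun x => x) (fun _ => 1) K

lemma spectralForm_snd (hA : A.IsHermitian) (hB : B.IsHermitian) (K : Matrix l m ℂ) :
    spectralForm (fun _ y => y) K A B = (Kᴴ * B * K).trace.re := by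
  simpa [mfun_one hA, mfun_id hB] using spectralForm_mul hA hB (fun _ => 1) (fun y => y) K

lemma isLeast_spectralForm_parallelSum (hA : A.PosSemidef) (hB : B.PosSemidef) {s : ℝ}
    (hs : 0 ≤ s) (K : Matrix l m ℂ) :
    IsLeast
      (range fun X : Matrix l m ℂ =>
        s * spectralForm (fun _ y => y) X A B + spectralForm (fun x _ => x) (K - X) A B)
      (spectralForm (fun x y => parallelSum x (s * y)) K A B) := by
  have hentry := fun i j => isLeast_parallelSum_mul_norm_sq (hA.eigenvalues_nonneg i)
    (mul_nonneg hs (hB.eigenvalues_nonneg j)) (eigenCoords hA.1 hB.1 K j i)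
  simp only [spectralForm_eq_sum hA.1 hB.1, map_sub, Matrix.sub_apply, Finset.mul_sum, ← mul_assoc,
    ← Finset.sum_add_distrib]
  constructor
  · choose a ha using fun i j => (hentry i j).1
    refine ⟨(eigenCoords hA.1 hB.1).symm (Matrix.of fun j i => a i j), ?_⟩
    simp only [LinearEquiv.apply_symm_apply, Matrix.of_apply, ha]
  · rintro _ ⟨X, rfl⟩
    exact Finset.sum_le_sum fun i _ => Finset.sum_le_sum fun j _ => (hentry i j).2 ⟨_, rfl⟩

end SpectralForm

section Integral

variable {m l Ω : Type*} [Fintype m] [Fintype l] [DecidableEq m] [DecidableEq l]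
  [MeasurableSpace Ω] {μ : Measure Ω} {A : Matrix m m ℂ} {B : Matrix l l ℂ} {φ : Ω → ℝ → ℝ → ℝ}

lemma integrable_spectralForm (hA : A.PosSemidef) (hB : B.PosSemidef) (K : Matrix l m ℂ)
    (hφ : ∀ x y, 0 ≤ x → 0 ≤ y → Integrable (fun ω => φ ω x y) μ) :
    Integrable (fun ω => spectralForm (φ ω) K A B) μ := by
  simp only [spectralForm_eq_sum hA.1 hB.1]
  exact integrable_finsetSum _ fun i _ => integrable_finsetSum _ fun j _ =>
    (hφ _ _ (hA.eigenvalues_nonneg i) (hB.eigenvalues_nonneg j)).mul_const _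

lemma spectralForm_integral (hA : A.PosSemidef) (hB : B.PosSemidef) (K : Matrix l m ℂ)
    (hφ : ∀ x y, 0 ≤ x → 0 ≤ y → Integrable (fun ω => φ ω x y) μ) :
    spectralForm (fun x y => ∫ ω, φ ω x y ∂μ) K A B = ∫ ω, spectralForm (φ ω) K A B ∂μ := by
  have hterm := fun i j => (hφ _ _ (hA.eigenvalues_nonneg i) (hB.eigenvalues_nonneg j)).mul_const
    (‖eigenCoords hA.1 hB.1 K j i‖ ^ 2)
  simp only [spectralForm_eq_sum hA.1 hB.1]
  rw [integral_finsetSum _ fun i _ => integrable_finsetSum _ fun j _ => hterm i j]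
  refine Finset.sum_congr rfl fun i _ => ?_
  rw [integral_finsetSum _ fun j _ => hterm i j]
  simp only [integral_mul_const]

end Integral

section JointConcavity

variable {m l : Type*}

variable (m l) in
/-- The pairs of positive semidefinite matrices, as the domain of joint concavity statements. -/
def posSemidefPairs : Set (Matrix m m ℂ × Matrix l l ℂ) :=
  {P | P.1.PosSemidef ∧ P.2.PosSemidef}

lemma convex_posSemidefPairs : Convex ℝ (posSemidefPairs m l) :=
  fun _ hP _ hQ _ _ ha hb _ =>
    ⟨(hP.1.smul ha).add (hQ.1.smul hb), (hP.2.smul ha).add (hQ.2.smul hb)⟩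

variable [Fintype m] [Fintype l] [DecidableEq m] [DecidableEq l] (K : Matrix l m ℂ)

lemma concaveOn_spectralForm_fst :
    ConcaveOn ℝ (posSemidefPairs m l) fun P => spectralForm (fun x _ => x) K P.1 P.2 := by
  have hlin : IsLinearMap ℝ fun P : Matrix m m ℂ × Matrix l l ℂ => (P.1 * Kᴴ * K).trace.re :=
    { map_add := fun P Q => by simp [Matrix.add_mul]
      map_smul := fun c P => by simp }
  exact (hlin.mk' _ |>.concaveOn convex_posSemidefPairs).congr fun P hP =>
    (spectralForm_fst hP.1.1 hP.2.1 K).symm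

lemma concaveOn_spectralForm_snd :
    ConcaveOn ℝ (posSemidefPairs m l) fun P => spectralForm (fun _ y => y) K P.1 P.2 := by
  have hlin : IsLinearMap ℝ fun P : Matrix m m ℂ × Matrix l l ℂ => (Kᴴ * P.2 * K).trace.re :=
    { map_add := fun P Q => by simp [Matrix.mul_add, Matrix.add_mul]
      map_smul := fun c P => by simp }
  exact (hlin.mk' _ |>.concaveOn convex_posSemidefPairs).congr fun P hP =>
    (spectralForm_snd hP.1.1 hP.2.1 K).symm

lemma concaveOn_spectralForm_parallelSum {s : ℝ} (hs : 0 ≤ s) :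
    ConcaveOn ℝ (posSemidefPairs m l) fun P =>
      spectralForm (fun x y => parallelSum x (s * y)) K P.1 P.2 :=
  concaveOn_of_forall_isGLB convex_posSemidefPairs
    (fun X => ((concaveOn_spectralForm_snd X).smul hs).add (concaveOn_spectralForm_fst (K - X)))
    fun _ hP => (isLeast_spectralForm_parallelSum hP.1 hP.2 hs K).isGLB

lemma concaveOn_spectralForm_integral {Ω : Type*} [MeasurableSpace Ω] {μ : Measure Ω}
    {φ : Ω → ℝ → ℝ → ℝ} (hφ : ∀ x y, 0 ≤ x → 0 ≤ y → Integrable (fun ω => φ ω x y) μ)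
    (hconc : ∀ᵐ ω ∂μ, ConcaveOn ℝ (posSemidefPairs m l) fun P => spectralForm (φ ω) K P.1 P.2) :
    ConcaveOn ℝ (posSemidefPairs m l) fun P =>
      spectralForm (fun x y => ∫ ω, φ ω x y ∂μ) K P.1 P.2 :=
  (integral_concaveOn_of_integrand_ae convex_posSemidefPairs hconc fun _ hP =>
    integrable_spectralForm hP.1 hP.2 K hφ).congr fun _ hP =>
      (spectralForm_integral hP.1 hP.2 K hφ).symm

lemma concaveOn_spectralForm_rpow_mul_rpow {p : ℝ} (hp : p ∈ Ioo 0 1) :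
    ConcaveOn ℝ (posSemidefPairs m l) fun P =>
      spectralForm (fun x y => x ^ p * y ^ (1 - p)) K P.1 P.2 := by
  obtain ⟨μ, hpos, hμ⟩ := exists_measure_rpow_mul_rpow_eq_integral_parallelSum hp
  have hconc : ∀ᵐ s ∂μ, ConcaveOn ℝ (posSemidefPairs m l) fun P =>
      spectralForm (fun x y => s ^ p / s ^ 2 * parallelSum x (s * y)) K P.1 P.2 := by
    filter_upwards [hpos] with s hs
    have hweight : 0 ≤ s ^ p / s ^ 2 := by positivity
    exact ((concaveOn_spectralForm_parallelSum K hs.le).smul hweight).congr fun P hP =>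
      (spectralForm_const_mul hP.1.1 hP.2.1 _ _ K).symm
  exact (concaveOn_spectralForm_integral K (fun x y hx hy => (hμ x y hx hy).1) hconc).congr
    fun P hP => spectralForm_congr hP.1 hP.2 K fun x y hx hy => (hμ x y hx hy).2.symm

/-- The endpoints use `0 ^ 0 = 1`: `mpow A 0 = 1` even when `A` is singular. -/
theorem lieb_concavity_trace_general {p : ℝ} (hp : p ∈ Icc 0 1) :
    ConcaveOn ℝ (posSemidefPairs m l) fun P =>
      (mpow P.1 p * Kᴴ * mpow P.2 (1 - p) * K).trace.re := by
  suffices h : ConcaveOn ℝ (posSemidefPairs m l) fun P =>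
      spectralForm (fun x y => x ^ p * y ^ (1 - p)) K P.1 P.2 from
    h.congr fun P hP => spectralForm_mul hP.1.1 hP.2.1 (· ^ p) (· ^ (1 - p)) K
  rcases eq_endpoints_or_mem_Ioo_of_mem_Icc hp with rfl | rfl | hp
  · simpa using concaveOn_spectralForm_snd K
  · simpa using concaveOn_spectralForm_fst K
  · exact concaveOn_spectralForm_rpow_mul_rpow K hp

end JointConcavity

theorem lieb_concavity_trace {n : ℕ} (K : Matrix (Fin n) (Fin n) ℂ) (p : ℝ)
    (hp0 : 0 ≤ p) (hp1 : p ≤ 1) (Z₀ Z₁ : Matrix (Fin n) (Fin n) ℂ)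
    (hZ₀ : Z₀.PosDef) (hZ₁ : Z₁.PosDef) (t : ℝ) (ht0 : 0 ≤ t) (ht1 : t ≤ 1) :
    (1 - t) * (mpow Z₀ p * Kᴴ * mpow Z₀ (1 - p) * K).trace.re +
        t * (mpow Z₁ p * Kᴴ * mpow Z₁ (1 - p) * K).trace.re ≤
      (mpow (((1 - t : ℝ) : ℂ) • Z₀ + ((t : ℝ) : ℂ) • Z₁) p * Kᴴ *
        mpow (((1 - t : ℝ) : ℂ) • Z₀ + ((t : ℝ) : ℂ) • Z₁) (1 - p) * K).trace.re := by
  have hconc := (lieb_concavity_trace_general K ⟨hp0, hp1⟩).2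
    (x := (Z₀, Z₀)) ⟨hZ₀.posSemidef, hZ₀.posSemidef⟩
    (y := (Z₁, Z₁)) ⟨hZ₁.posSemidef, hZ₁.posSemidef⟩ (sub_nonneg.2 ht1) ht0 (sub_add_cancel 1 t)
  simpa only [Complex.coe_smul, smul_eq_mul, Prod.smul_mk, Prod.mk_add_mk] using hconc
end

section
/- For positive definite n×n matrices ρ, σ with tr(ρ) = 1 and α > 1, the sandwiched Rényi relative entropy D_α(ρ‖σ) = (α−1)^{−1} log tr((σ^{(1−α)/(2α)} ρ σ^{(1−α)/(2α)})^α) satisfies D_α(ρ‖σ) ≤ D'_α(ρ‖σ) = (α−1)^{−1} log tr(σ^{1−α} ρ^α). -/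
open Matrix ComplexOrder

/-!
The Lieb-Thirring inequality `tr (B^{1/2} A B^{1/2})^α ≤ tr (B^α A^α)` comes from Hadamard's three
lines theorem. With `X = B^{1/2} A B^{1/2}`, the entire function
`F z = tr (X^{α(1-z)} B^{αz/2} A^{αz} B^{αz/2})` takes the value `tr X^α` at `z = 1/α`. Imaginary
powers are unitary, so the trace Cauchy-Schwarz inequality gives `|F| ≤ tr X^α` on `re z = 0` and
`|F| ≤ tr (B^α A^α)` on `re z = 1`; interpolating between the two at `1/α` yields the claim.
The entropies are compared by taking `A = ρ` and `B = σ^{(1-α)/α}`.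
-/

section Powers

open scoped Matrix.Norms.L2Operator

variable {m : Type*} [Fintype m] [DecidableEq m]

lemma mfun_eq_cfc (f : ℝ → ℝ) (A : Matrix m m ℂ) : mfun f A = cfc f A := by
  by_cases hA : A.IsHermitian
  · simp [mfun, hA, hA.cfc_eq, IsHermitian.cfc, Unitary.conjStarAlgAut_apply, Function.comp_def]
  · rw [mfun, dif_neg hA]
    exact (cfc_apply_of_not_predicate (p := IsSelfAdjoint) A hA).symm

lemma mfun_mfun (f g : ℝ → ℝ) {A : Matrix m m ℂ} (hA : A.IsHermitian) :
    mfun g (mfun f A) = mfun (g ∘ f) A := by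
  have hf := A.finite_real_spectrum.continuousOn f
  have hg := (A.finite_real_spectrum.image f).continuousOn g
  simp only [mfun_eq_cfc, cfc_comp g f A]

lemma mfun_congr_of_pos {f g : ℝ → ℝ} {A : Matrix m m ℂ} (hA : A.PosDef)
    (h : ∀ x, 0 < x → f x = g x) :
    mfun f A = mfun g A := by
  simp only [mfun, hA.isHermitian, h _ (hA.eigenvalues_pos _)]

lemma isHermitian_mfun (f : ℝ → ℝ) (A : Matrix m m ℂ) : (mfun f A).IsHermitian := by
  rw [mfun_eq_cfc]
  exact cfc_predicate f A

lemma mpow_mpow {A : Matrix m m ℂ} (hA : A.PosDef) (p q : ℝ) :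
    mpow (mpow A p) q = mpow A (p * q) := by
  unfold mpow
  rw [mfun_mfun _ _ hA.isHermitian]
  exact mfun_congr_of_pos hA fun x hx => (Real.rpow_mul hx.le p q).symm

lemma mpow_one {A : Matrix m m ℂ} (hA : A.IsHermitian) : mpow A 1 = A := by
  simp only [mpow, Real.rpow_one, mfun_eq_cfc, cfc_id' ℝ A]

/-- The complex power `A ^ z = exp (z log A)` of a positive definite matrix. The logarithm is taken
by the Hermitian functional calculus, so for other matrices the value depends on the conventions of
`Real.log` and `mfun`. -/
noncomputable def mcpow (A : Matrix m m ℂ) (z : ℂ) : Matrix m m ℂ :=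
  NormedSpace.exp (z • mfun Real.log A)

lemma mcpow_zero (A : Matrix m m ℂ) : mcpow A 0 = 1 := by
  rw [mcpow, zero_smul, NormedSpace.exp_zero]

lemma mcpow_add (A : Matrix m m ℂ) (z w : ℂ) : mcpow A (z + w) = mcpow A z * mcpow A w := by
  rw [mcpow, add_smul]
  exact Matrix.exp_add_of_commute _ _ (((Commute.refl _).smul_left z).smul_right w)

lemma conjTranspose_mcpow (A : Matrix m m ℂ) (z : ℂ) : (mcpow A z)ᴴ = mcpow A (star z) := by
  rw [mcpow, ← exp_conjTranspose, conjTranspose_smul, (isHermitian_mfun Real.log A).eq, mcpow]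

lemma mcpow_mul_conjTranspose (A : Matrix m m ℂ) (z : ℂ) :
    mcpow A z * (mcpow A z)ᴴ = mcpow A (2 * z.re : ℝ) := by
  rw [conjTranspose_mcpow, ← mcpow_add]
  exact congrArg _ (Complex.add_conj z)

lemma conjTranspose_mul_mcpow (A : Matrix m m ℂ) (z : ℂ) :
    (mcpow A z)ᴴ * mcpow A z = mcpow A (2 * z.re : ℝ) := by
  rw [conjTranspose_mcpow, ← mcpow_add, add_comm]
  exact congrArg _ (Complex.add_conj z)

lemma mcpow_mem_unitaryGroup (A : Matrix m m ℂ) {z : ℂ} (hz : z.re = 0) :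
    mcpow A z ∈ unitaryGroup m ℂ := by
  rw [mem_unitaryGroup_iff, star_eq_conjTranspose, mcpow_mul_conjTranspose]
  simp [hz, mcpow_zero]

lemma differentiable_mcpow (A : Matrix m m ℂ) : Differentiable ℂ (mcpow A) := fun z =>
  (hasDerivAt_exp_smul_const (mfun Real.log A) z).differentiableAt

lemma norm_mcpow (A : Matrix m m ℂ) (z : ℂ) : ‖mcpow A z‖ = ‖mcpow A z.re‖ := by
  have h : ‖mcpow A z‖ * ‖mcpow A z‖ = ‖mcpow A z.re‖ * ‖mcpow A z.re‖ := by
    simp only [← CStarRing.norm_self_mul_star, star_eq_conjTranspose, mcpow_mul_conjTranspose,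
      Complex.ofReal_re]
  exact (mul_self_inj (norm_nonneg _) (norm_nonneg _)).1 h

lemma exists_norm_mcpow_le (A : Matrix m m ℂ) (r : ℝ) :
    ∃ C, ∀ z : ℂ, |z.re| ≤ r → ‖mcpow A z‖ ≤ C := by
  have hcont : Continuous fun x : ℝ => mcpow A x :=
    (differentiable_mcpow A).continuous.comp Complex.continuous_ofReal
  obtain ⟨C, hC⟩ := isCompact_Icc.exists_bound_of_continuousOn (s := Set.Icc (-r) r)
    hcont.continuousOn
  exact ⟨C, fun z hz => norm_mcpow A z ▸ hC z.re (abs_le.1 hz)⟩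

lemma mcpow_ofReal {A : Matrix m m ℂ} (hA : A.PosDef) (p : ℝ) : mcpow A p = mpow A p := by
  have hlog : (p : ℂ) • mfun Real.log A = mfun (fun x => p * Real.log x) A := by
    have hcont := A.finite_real_spectrum.continuousOn Real.log
    simp only [mfun_eq_cfc, cfc_const_mul p Real.log A]
    rfl
  rw [mcpow, hlog, ← CFC.real_exp_eq_normedSpace_exp (isHermitian_mfun _ A).isSelfAdjoint,
    ← mfun_eq_cfc, mfun_mfun _ _ hA.isHermitian]
  refine mfun_congr_of_pos hA fun x hx => ?_
  rw [Real.rpow_def_of_pos hx, mul_comm, Function.comp_apply]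

lemma posDef_mpow {A : Matrix m m ℂ} (hA : A.PosDef) (p : ℝ) : (mpow A p).PosDef := by
  have h : mpow A p = mcpow A (p / 2 : ℝ) * (mcpow A (p / 2 : ℝ))ᴴ := by
    rw [mcpow_mul_conjTranspose, Complex.ofReal_re, mul_div_cancel₀ p two_ne_zero, mcpow_ofReal hA]
  have hpsd : (mpow A p).PosSemidef := by
    rw [h]
    exact posSemidef_self_mul_conjTranspose _
  have hunit : IsUnit (mpow A p) := by
    rw [← mcpow_ofReal hA]
    exact Matrix.isUnit_exp _
  exact hpsd.posDef_iff_isUnit.2 hunit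

lemma posDef_mpow_mul_mul_mpow {A B : Matrix m m ℂ} (hA : A.PosDef) (hB : B.PosDef) (p : ℝ) :
    (mpow B p * A * mpow B p).PosDef := by
  have h := posDef_mpow hB p
  simpa only [h.isHermitian.eq] using
    hA.mul_mul_conjTranspose_same (vecMul_injective_of_isUnit h.isUnit)

end Powers

section Trace

variable {m n : Type*} [Fintype m] [Fintype n]

lemma re_trace_mul_conjTranspose (P : Matrix m n ℂ) :
    (P * Pᴴ).trace.re = ∑ i, ∑ j, ‖P i j‖ ^ 2 := by
  simp only [trace, diag_apply, mul_apply, conjTranspose_apply, Complex.re_sum]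
  exact Finset.sum_congr rfl fun i _ => Finset.sum_congr rfl fun j _ =>
    mod_cast congrArg Complex.re (Complex.mul_conj' (P i j))

lemma norm_trace_mul_le (P : Matrix m n ℂ) (Q : Matrix n m ℂ) :
    ‖(P * Q).trace‖ ≤ ((P * Pᴴ).trace.re + (Q * Qᴴ).trace.re) / 2 := by
  calc ‖(P * Q).trace‖ ≤ ∑ i, ∑ j, ‖P i j‖ * ‖Q j i‖ := by
        simp only [trace, diag_apply, mul_apply, ← norm_mul]
        exact norm_sum_le_of_le _ fun i _ => norm_sum_le _ _
    _ ≤ ∑ i, ∑ j, (‖P i j‖ ^ 2 + ‖Q j i‖ ^ 2) / 2 := by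
        gcongr with i _ j _
        linarith [two_mul_le_add_sq ‖P i j‖ ‖Q j i‖]
    _ = ((P * Pᴴ).trace.re + (Q * Qᴴ).trace.re) / 2 := by
        rw [re_trace_mul_conjTranspose, re_trace_mul_conjTranspose,
          Finset.sum_comm (f := fun i j => ‖Q i j‖ ^ 2)]
        simp only [← Finset.sum_div, Finset.sum_add_distrib]

lemma trace_mul_mul_conjTranspose {l : Type*} [Fintype l] (P : Matrix l m ℂ) (Q : Matrix m n ℂ) :
    (P * Q * (P * Q)ᴴ).trace = (Pᴴ * P * (Q * Qᴴ)).trace := by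
  rw [conjTranspose_mul, ← Matrix.mul_assoc, trace_mul_comm]
  simp only [Matrix.mul_assoc]

lemma norm_trace_unitary_mul_le [DecidableEq m] {U : Matrix m m ℂ} (hU : U ∈ unitaryGroup m ℂ)
    (P : Matrix m n ℂ) (Q : Matrix n m ℂ) :
    ‖(U * (P * Q)).trace‖ ≤ ((P * Pᴴ).trace.re + (Q * Qᴴ).trace.re) / 2 := by
  have hP : (U * P * (U * P)ᴴ).trace = (P * Pᴴ).trace := by
    rw [trace_mul_mul_conjTranspose, ← star_eq_conjTranspose, mem_unitaryGroup_iff'.1 hU,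
      Matrix.one_mul]
  have h := norm_trace_mul_le (U * P) Q
  rwa [hP, Matrix.mul_assoc] at h

end Trace

section LiebThirring

open scoped Matrix.Norms.L2Operator

variable {m : Type*} [Fintype m] [DecidableEq m]

lemma norm_trace_mcpow_mul_unitary_le {A U : Matrix m m ℂ} (hA : A.PosDef)
    (hU : U ∈ unitaryGroup m ℂ) (z : ℂ) :
    ‖(mcpow A z * U).trace‖ ≤ (mpow A z.re).trace.re := by
  have h := norm_trace_unitary_mul_le hU (mcpow A (z / 2)) (mcpow A (z / 2))
  have hre : 2 * (z / 2).re = z.re := by simp [mul_div_cancel₀]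
  rwa [← mcpow_add, add_halves, mcpow_mul_conjTranspose, hre, mcpow_ofReal hA, add_self_div_two,
    trace_mul_comm] at h

lemma norm_trace_unitary_mul_mcpow_le {A B U : Matrix m m ℂ} (hA : A.PosDef) (hB : B.PosDef)
    (hU : U ∈ unitaryGroup m ℂ) (z : ℂ) :
    ‖(U * (mcpow B (z / 2) * mcpow A z * mcpow B (z / 2))).trace‖ ≤
      (mpow B z.re * mpow A z.re).trace.re := by
  set a := mcpow A (z / 2) with ha
  set b := mcpow B (z / 2)
  have hre : 2 * (z / 2).re = z.re := by simp [mul_div_cancel₀]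
  have hba : (b * a * (b * a)ᴴ).trace = (mpow B z.re * mpow A z.re).trace := by
    rw [trace_mul_mul_conjTranspose, conjTranspose_mul_mcpow, mcpow_mul_conjTranspose, hre,
      mcpow_ofReal hA, mcpow_ofReal hB]
  have hab : (a * b * (a * b)ᴴ).trace = (mpow B z.re * mpow A z.re).trace := by
    rw [trace_mul_mul_conjTranspose, trace_mul_comm, conjTranspose_mul_mcpow,
      mcpow_mul_conjTranspose, hre, mcpow_ofReal hA, mcpow_ofReal hB]
  have hz : mcpow A z = a * a := by rw [ha, ← mcpow_add, add_halves]
  have h := norm_trace_unitary_mul_le hU (b * a) (a * b)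
  rw [hba, hab, add_self_div_two] at h
  simpa only [hz, Matrix.mul_assoc] using h

/-- The function of `z` interpolating in the proof of the Lieb-Thirring inequality; `X` stands for
`B ^ (1 / 2) * A * B ^ (1 / 2)`. -/
noncomputable def liebThirringInterp (X A B : Matrix m m ℂ) (α : ℝ) (z : ℂ) : ℂ :=
  (mcpow X (α * (1 - z)) * (mcpow B (α * z / 2) * mcpow A (α * z) * mcpow B (α * z / 2))).trace

lemma differentiable_liebThirringInterp (X A B : Matrix m m ℂ) (α : ℝ) :
    Differentiable ℂ (liebThirringInterp X A B α) := by
  have hX := (differentiable_mcpow X).comp (f := fun z : ℂ => α * (1 - z)) (by fun_prop)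
  have hA := (differentiable_mcpow A).comp (f := fun z : ℂ => α * z) (by fun_prop)
  have hB := (differentiable_mcpow B).comp (f := fun z : ℂ => α * z / 2) (by fun_prop)
  exact (traceLinearMap m ℂ ℂ).toContinuousLinearMap.differentiable.comp
    (hX.mul ((hB.mul hA).mul hB))

lemma bddAbove_norm_liebThirringInterp (X A B : Matrix m m ℂ) {α : ℝ} (hα : 0 ≤ α) :
    BddAbove ((norm ∘ liebThirringInterp X A B α) ''
      Complex.HadamardThreeLines.verticalClosedStrip 0 1) := by
  obtain ⟨CX, hX⟩ := exists_norm_mcpow_le X α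
  obtain ⟨CA, hA⟩ := exists_norm_mcpow_le A α
  obtain ⟨CB, hB⟩ := exists_norm_mcpow_le B α
  let tr := (traceLinearMap m ℂ ℂ).toContinuousLinearMap
  refine ⟨‖tr‖ * (CX * (CB * CA * CB)), ?_⟩
  rintro _ ⟨z, ⟨hz₀ : 0 ≤ z.re, hz₁ : z.re ≤ 1⟩, rfl⟩
  have hX' := hX (α * (1 - z)) (by
    simp only [Complex.re_ofReal_mul, Complex.sub_re, Complex.one_re, abs_le]
    constructor <;> nlinarith)
  have hA' := hA (α * z) (by
    simp only [Complex.re_ofReal_mul, abs_le]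
    constructor <;> nlinarith)
  have hB' := hB (α * z / 2) (by
    simp only [Complex.div_ofNat_re, Complex.re_ofReal_mul, abs_le]
    constructor <;> nlinarith)
  calc ‖tr (mcpow X (α * (1 - z)) *
          (mcpow B (α * z / 2) * mcpow A (α * z) * mcpow B (α * z / 2)))‖
      ≤ ‖tr‖ * ‖mcpow X (α * (1 - z)) *
          (mcpow B (α * z / 2) * mcpow A (α * z) * mcpow B (α * z / 2))‖ := tr.le_opNorm _
    _ ≤ ‖tr‖ * (CX * (CB * CA * CB)) := by
        gcongr
        exact norm_mul_le_of_le hX' (norm_mul_le_of_le (norm_mul_le_of_le hB' hA') hB')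

lemma norm_liebThirringInterp_le_of_re_eq_zero {X : Matrix m m ℂ} (hX : X.PosDef)
    (A B : Matrix m m ℂ) (α : ℝ) {z : ℂ} (hz : z.re = 0) :
    ‖liebThirringInterp X A B α z‖ ≤ (mpow X α).trace.re := by
  have hA := mcpow_mem_unitaryGroup A (z := α * z) (by simp [hz])
  have hB := mcpow_mem_unitaryGroup B (z := α * z / 2) (by simp [hz])
  simpa [liebThirringInterp, hz] using
    norm_trace_mcpow_mul_unitary_le hX (mul_mem (mul_mem hB hA) hB) (α * (1 - z))

lemma norm_liebThirringInterp_le_of_re_eq_one (X : Matrix m m ℂ) {A B : Matrix m m ℂ}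
    (hA : A.PosDef) (hB : B.PosDef) (α : ℝ) {z : ℂ} (hz : z.re = 1) :
    ‖liebThirringInterp X A B α z‖ ≤ (mpow B α * mpow A α).trace.re := by
  have hX := mcpow_mem_unitaryGroup X (z := α * (1 - z)) (by simp [hz])
  simpa [liebThirringInterp, hz] using norm_trace_unitary_mul_mcpow_le hA hB hX (α * z)

lemma liebThirringInterp_inv {A B : Matrix m m ℂ} (hA : A.PosDef) (hB : B.PosDef) {α : ℝ}
    (hα : α ≠ 0) :
    liebThirringInterp (mpow B (1 / 2) * A * mpow B (1 / 2)) A B α (α⁻¹ : ℝ) =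
      (mpow (mpow B (1 / 2) * A * mpow B (1 / 2)) α).trace := by
  set X := mpow B (1 / 2) * A * mpow B (1 / 2) with hX_def
  have hX : X.PosDef := posDef_mpow_mul_mul_mpow hA hB (1 / 2)
  have hone : (α : ℂ) * (α⁻¹ : ℝ) = (1 : ℝ) := mod_cast mul_inv_cancel₀ hα
  have hhalf : ((1 : ℝ) : ℂ) / 2 = ((1 / 2 : ℝ) : ℂ) := by push_cast; rfl
  have hpow : mcpow X (α - 1) * X = mpow X α := by
    calc mcpow X (α - 1) * X = mcpow X (α - 1) * mcpow X (1 : ℝ) := by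
          rw [mcpow_ofReal hX, mpow_one hX.isHermitian]
      _ = mpow X α := by
          rw [← mcpow_add, Complex.ofReal_one, sub_add_cancel, mcpow_ofReal hX]
  rw [liebThirringInterp, mul_one_sub, hone, hhalf, mcpow_ofReal hA, mcpow_ofReal hB,
    mpow_one hA.isHermitian, ← hX_def, Complex.ofReal_one, hpow]

lemma le_of_le_rpow_one_sub_mul_rpow {a b t : ℝ} (hb : 0 ≤ b) (ht : 0 < t)
    (h : a ≤ a ^ (1 - t) * b ^ t) : a ≤ b := by
  by_contra! hba
  have ha : 0 < a := hb.trans_lt hba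
  refine h.not_gt ?_
  calc a ^ (1 - t) * b ^ t < a ^ (1 - t) * a ^ t := by gcongr
    _ = a := by rw [← Real.rpow_add ha, sub_add_cancel, Real.rpow_one]

theorem lieb_thirring {A B : Matrix m m ℂ} (hA : A.PosDef) (hB : B.PosDef) {α : ℝ} (hα : 1 ≤ α) :
    (mpow (mpow B (1 / 2) * A * mpow B (1 / 2)) α).trace.re ≤
      (mpow B α * mpow A α).trace.re := by
  set X := mpow B (1 / 2) * A * mpow B (1 / 2) with hX_def
  have hX : X.PosDef := posDef_mpow_mul_mul_mpow hA hB (1 / 2)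
  have hα₀ : 0 < α := zero_lt_one.trans_le hα
  have hmem : ((α⁻¹ : ℝ) : ℂ) ∈ Complex.HadamardThreeLines.verticalClosedStrip 0 1 :=
    ⟨inv_nonneg.2 hα₀.le, inv_le_one_of_one_le₀ hα⟩
  have hleft : ∀ z : ℂ, z.re = 0 → ‖liebThirringInterp X A B α z‖ ≤ (mpow X α).trace.re :=
    fun _ => norm_liebThirringInterp_le_of_re_eq_zero hX A B α
  have hright : ∀ z : ℂ, z.re = 1 →
      ‖liebThirringInterp X A B α z‖ ≤ (mpow B α * mpow A α).trace.re :=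
    fun _ => norm_liebThirringInterp_le_of_re_eq_one X hA hB α
  have hinterp := Complex.HadamardThreeLines.norm_le_interp_of_mem_verticalClosedStrip₀₁' _ hmem
    (differentiable_liebThirringInterp X A B α).diffContOnCl
    (bddAbove_norm_liebThirringInterp X A B hα₀.le) hleft hright
  rw [liebThirringInterp_inv hA hB hα₀.ne', ← hX_def] at hinterp
  exact le_of_le_rpow_one_sub_mul_rpow ((norm_nonneg _).trans (hright 1 Complex.one_re))
    (inv_pos.2 hα₀) ((Complex.re_le_norm _).trans hinterp)

end LiebThirring

theorem sandwiched_le_traditional_general {m : Type*} [Fintype m] [DecidableEq m] [Nonempty m]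
    {ρ σ : Matrix m m ℂ} (hρ : ρ.PosDef) (hσ : σ.PosDef) {α : ℝ} (hα : 1 < α) :
    (α - 1)⁻¹ *
        Real.log ((mpow (mpow σ ((1 - α) / (2 * α)) * ρ * mpow σ ((1 - α) / (2 * α))) α).trace.re) ≤
      (α - 1)⁻¹ * Real.log ((mpow σ (1 - α) * mpow ρ α).trace.re) := by
  have hα₀ : α ≠ 0 := (zero_lt_one.trans hα).ne'
  have htrace := lieb_thirring hρ (posDef_mpow hσ ((1 - α) / α)) hα.le
  rw [mpow_mpow hσ, mpow_mpow hσ, div_mul_cancel₀ _ hα₀, div_mul_div_comm, mul_one, mul_comm α 2]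
    at htrace
  have hpos := (posDef_mpow (posDef_mpow_mul_mul_mpow hρ hσ ((1 - α) / (2 * α))) α).trace_pos
  exact mul_le_mul_of_nonneg_left (Real.log_le_log (Complex.pos_iff.1 hpos).1 htrace)
    (inv_nonneg.2 (sub_nonneg.2 hα.le))

theorem sandwiched_le_traditional {n : ℕ} (ρ σ : Matrix (Fin n) (Fin n) ℂ)
    (hρ : ρ.PosDef) (hσ : σ.PosDef) (htr : ρ.trace = 1) (α : ℝ) (hα : 1 < α) :
    (α - 1)⁻¹ *
        Real.log ((mpow (mpow σ ((1 - α) / (2 * α)) * ρ * mpow σ ((1 - α) / (2 * α))) α).trace.re) ≤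
      (α - 1)⁻¹ * Real.log ((mpow σ (1 - α) * mpow ρ α).trace.re) := by
  have : Nonempty (Fin n) :=
    not_isEmpty_iff.1 fun _ => zero_ne_one (trace_eq_zero_of_isEmpty ρ ▸ htr)
  exact sandwiched_le_traditional_general hρ hσ hα
end
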